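/- The number of ~_s-equivalence classes of s-recurrent configurations equals the period constant of G: |Rec(G,s)/~_s| = α, where α := gcd_{v∈V} det(Δ_v) and Δ_v denotes the reduced Laplacian obtained from the Laplacian Δ of G by deleting the row and the column indexed by v. In particular, |Rec(G,s)/~_s| does not depend on the choice of s. -/

import Mathlib

open Finset Polynomial

namespace SandpileBM

variable {V E : Type} [Fintype V] [DecidableEq V] [Fintype E] [DecidableEq E]

/-- The number of edges from `v` to `w` in the multigraph given by `src`, `tgt`. -/
def numEdges (src tgt : E → V) (v w : V) : ℕ :=
  (Finset.univ.filter fun e => src e = v ∧ tgt e = w).card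

/-- The out-degree of a vertex. -/
def outdeg (src : E → V) (v : V) : ℕ :=
  (Finset.univ.filter fun e => src e = v).card

/-- The in-degree of a vertex. -/
def indeg (tgt : E → V) (v : V) : ℕ :=
  (Finset.univ.filter fun e => tgt e = v).card

/-- The digraph is strongly connected: any vertex is reachable from any other by
a directed path. -/
def StronglyConnected (src tgt : E → V) : Prop :=
  ∀ v w : V, Relation.ReflTransGen (fun a b => ∃ e : E, src e = a ∧ tgt e = b) v w

/-- Result of firing the vertex `v` on the chip configuration `c` (sinkless model). -/
def fire (src tgt : E → V) (c : V → ℕ) (v : V) : V → ℕ :=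
  fun w => c w + numEdges src tgt v w - (if w = v then outdeg src v else 0)

/-- One legal firing move in the sinkless model. -/
def FireStep (src tgt : E → V) (c d : V → ℕ) : Prop :=
  ∃ v : V, outdeg src v ≤ c v ∧ d = fire src tgt c v

/-- `Reach c d`: `d` is obtained from `c` by a finite sequence of legal firing moves. -/
def Reach (src tgt : E → V) : (V → ℕ) → (V → ℕ) → Prop :=
  Relation.ReflTransGen (FireStep src tgt)

/-- Stability of a chip configuration. -/
def Stable (src : E → V) (c : V → ℕ) : Prop :=
  ∀ v : V, c v < outdeg src v

/-- A chip configuration is recurrent if it is not stable and every configuration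
accessible from it can reach it back. -/
def Recurrent (src tgt : E → V) (c : V → ℕ) : Prop :=
  ¬ Stable src c ∧ ∀ d : V → ℕ, Reach src tgt c d → Reach src tgt d c

/-- Level (total number of chips) of a chip configuration. -/
def lvl (c : V → ℕ) : ℕ := ∑ v : V, c v

/-- Indicator function of the vertex `s`. -/
def deltaS (s : V) : V → ℕ := fun v => if v = s then 1 else 0

/-- Result of firing the vertex `v` on an `s`-configuration. -/
def sfire (src tgt : E → V) (s : V) (c : {v : V // v ≠ s} → ℕ) (v : {v : V // v ≠ s}) :
    {v : V // v ≠ s} → ℕ :=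
  fun w => c w + numEdges src tgt v.1 w.1 - (if w = v then outdeg src v.1 else 0)

/-- One legal s-firing move. -/
def SFireStep (src tgt : E → V) (s : V) (c d : {v : V // v ≠ s} → ℕ) : Prop :=
  ∃ v : {v : V // v ≠ s}, outdeg src v.1 ≤ c v ∧ d = sfire src tgt s c v

/-- `SReach c d`: `d` is obtained from `c` by a finite sequence of legal s-firing moves. -/
def SReach (src tgt : E → V) (s : V) :
    ({v : V // v ≠ s} → ℕ) → ({v : V // v ≠ s} → ℕ) → Prop :=
  Relation.ReflTransGen (SFireStep src tgt s)

/-- Stability of an `s`-configuration. -/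
def SStable (src : E → V) (s : V) (c : {v : V // v ≠ s} → ℕ) : Prop :=
  ∀ v : {v : V // v ≠ s}, c v < outdeg src v.1

/-- The stabilization `c°` of an `s`-configuration: the (for strongly connected digraphs,
unique) stable `s`-configuration reachable from `c` by legal s-firing moves. -/
noncomputable def stab (src tgt : E → V) (s : V) (c : {v : V // v ≠ s} → ℕ) :
    {v : V // v ≠ s} → ℕ :=
  Classical.epsilon fun d => SReach src tgt s c d ∧ SStable src s d

/-- An `s`-configuration `c` is s-recurrent if every `s`-configuration can be completed
to one whose stabilization is `c`. -/
def SRecurrent (src tgt : E → V) (s : V) (c : {v : V // v ≠ s} → ℕ) : Prop :=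
  ∀ c₁ : {v : V // v ≠ s} → ℕ, ∃ c₂ : {v : V // v ≠ s} → ℕ,
    stab src tgt s (c₁ + c₂) = c

/-- `β_s`, recording the number of edges from `s` to each other vertex. -/
def betaS (src tgt : E → V) (s : V) : {v : V // v ≠ s} → ℕ :=
  fun v => numEdges src tgt s v.1

/-- The relation `~_s` on s-recurrent configurations: `d = (c + k·β_s)°` for some `k`. -/
def SEquiv (src tgt : E → V) (s : V) (c d : {v : V // v ≠ s} → ℕ) : Prop :=
  ∃ k : ℕ, stab src tgt s (c + k • betaS src tgt s) = d

/-- Restriction of a chip configuration to `V ∖ {s}`. -/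
def restrictS (s : V) (c : V → ℕ) : {v : V // v ≠ s} → ℕ := fun v => c v.1

/-- Extension `c̄` of an `s`-configuration by `0` at `s`. -/
def extendS (s : V) (c : {v : V // v ≠ s} → ℕ) : V → ℕ :=
  fun v => if h : v = s then 0 else c ⟨v, h⟩

/-- The s-index `χ(c)`: the least `k` such that `c̄ + k·δ_s` is recurrent. -/
noncomputable def sIndex (src tgt : E → V) (s : V) (c : {v : V // v ≠ s} → ℕ) : ℕ :=
  sInf {k : ℕ | Recurrent src tgt (extendS s c + k • deltaS s)}

/-- `φ(c) := c̄ + χ(c)·δ_s`. -/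
noncomputable def phi (src tgt : E → V) (s : V) (c : {v : V // v ≠ s} → ℕ) : V → ℕ :=
  extendS s c + sIndex src tgt s c • deltaS s

/-- The s-level `slvl(c) := χ(c) + Σ_{v ≠ s} c(v)`. -/
noncomputable def slvl (src tgt : E → V) (s : V) (c : {v : V // v ≠ s} → ℕ) : ℕ :=
  sIndex src tgt s c + ∑ v : {v : V // v ≠ s}, c v

/-- The d-level `dlvl(c) := deg⁺(s) + Σ_{v ≠ s} c(v)`. -/
def dlvl (src : E → V) (s : V) (c : {v : V // v ≠ s} → ℕ) : ℕ :=
  outdeg src s + ∑ v : {v : V // v ≠ s}, c v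

/-- The set (as a type) of recurrent chip configurations. -/
abbrev RecL (src tgt : E → V) := {c : V → ℕ // Recurrent src tgt c}

/-- The setoid on recurrent configurations generated by the relation `~` (i.e. `⤳`). -/
def recLSetoid (src tgt : E → V) : Setoid (RecL src tgt) :=
  Relation.EqvGen.setoid fun a b => Reach src tgt a.1 b.1

/-- The set of `~`-classes of recurrent configurations. -/
abbrev RecLQuot (src tgt : E → V) := Quotient (recLSetoid src tgt)

/-- The set (as a type) of s-recurrent configurations. -/
abbrev RecS (src tgt : E → V) (s : V) := {c : {v : V // v ≠ s} → ℕ // SRecurrent src tgt s c}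

/-- The setoid on s-recurrent configurations generated by the relation `~_s`. -/
def recSSetoid (src tgt : E → V) (s : V) : Setoid (RecS src tgt s) :=
  Relation.EqvGen.setoid fun a b => SEquiv src tgt s a.1 b.1

/-- The set of `~_s`-classes of s-recurrent configurations. -/
abbrev RecSQuot (src tgt : E → V) (s : V) := Quotient (recSSetoid src tgt s)

/-- The level of a `~`-class of recurrent configurations (level is constant on classes). -/
noncomputable def lvlClass (src tgt : E → V) (q : RecLQuot src tgt) : ℕ :=
  sSup ((fun c : RecL src tgt => lvl c.1) '' {c | Quotient.mk (recLSetoid src tgt) c = q})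

/-- The s-level of a `~_s`-class (s-level is constant on classes). -/
noncomputable def slvlClass (src tgt : E → V) (s : V) (q : RecSQuot src tgt s) : ℕ :=
  sSup ((fun c : RecS src tgt s => slvl src tgt s c.1) ''
    {c | Quotient.mk (recSSetoid src tgt s) c = q})

/-- The d-level of a `~_s`-class: the maximum d-level over the class. -/
noncomputable def dlvlClass (src tgt : E → V) (s : V) (q : RecSQuot src tgt s) : ℕ :=
  sSup ((fun c : RecS src tgt s => dlvl src s c.1) ''
    {c | Quotient.mk (recSSetoid src tgt s) c = q})

/-- The Biggs–Merino polynomial `B(G,s;y) = Σ_{[c] ∈ Rec(G,s)/~_s} y^{dlvl([c])}`. -/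
noncomputable def BM (src tgt : E → V) (s : V) : Polynomial ℤ :=
  ∑ᶠ q : RecSQuot src tgt s, X ^ dlvlClass src tgt s q

/-- `LegalSeq l c d`: firing the vertices in the list `l` in order is a sequence of
legal firing moves transforming `c` into `d` (sinkless model). -/
def LegalSeq (src tgt : E → V) : List V → (V → ℕ) → (V → ℕ) → Prop
  | [], c, d => d = c
  | v :: l, c, d => outdeg src v ≤ c v ∧ LegalSeq src tgt l (fire src tgt c v) d

/-- `SLegalSeq l c d`: firing the vertices in the list `l` in order is a sequence of
legal s-firing moves transforming `c` into `d`. -/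
def SLegalSeq (src tgt : E → V) (s : V) :
    List {v : V // v ≠ s} → ({v : V // v ≠ s} → ℕ) → ({v : V // v ≠ s} → ℕ) → Prop
  | [], c, d => d = c
  | v :: l, c, d => outdeg src v.1 ≤ c v ∧ SLegalSeq src tgt s l (sfire src tgt s c v) d

/-- The configuration obtained from `c` after firing the vertices of `l` in order. -/
def iterFire (src tgt : E → V) (c : V → ℕ) (l : List V) : V → ℕ :=
  l.foldl (fire src tgt) c

/-- The Laplacian of the digraph applied to an integer vector:
`(Δq)(v) = deg⁺(v)·q(v) − Σ_w A(w,v)·q(w)`. -/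
def lapApply (src tgt : E → V) (q : V → ℤ) : V → ℤ :=
  fun v => (outdeg src v : ℤ) * q v - ∑ w : V, (numEdges src tgt w v : ℤ) * q w

/-- `r` is the primitive period vector of the digraph: it has positive entries with
gcd `1`, lies in the kernel of the Laplacian, and generates this kernel. -/
def IsPeriodVector (src tgt : E → V) (r : V → ℕ) : Prop :=
  (∀ v : V, 0 < r v) ∧ Finset.univ.gcd r = 1 ∧
    lapApply src tgt (fun v => (r v : ℤ)) = 0 ∧
    ∀ q : V → ℤ, lapApply src tgt q = 0 → ∃ k : ℤ, q = k • fun v => (r v : ℤ)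

/-- The Laplacian matrix of the digraph. -/
def lapMatrix (src tgt : E → V) : Matrix V V ℤ :=
  Matrix.of fun v w =>
    if v = w then (outdeg src v : ℤ) - numEdges src tgt v v
    else -(numEdges src tgt w v : ℤ)

/-- The determinant of the reduced Laplacian obtained by deleting the row and
column indexed by `v`. -/
def reducedLapDet (src tgt : E → V) (v : V) : ℤ :=
  (((lapMatrix src tgt).submatrix (fun a : {w : V // w ≠ v} => a.1)
    (fun a : {w : V // w ≠ v} => a.1)).det)

/-- The period constant `α := gcd_{v ∈ V} det Δ_v`. -/
def periodConstant (src tgt : E → V) : ℤ :=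
  Finset.univ.gcd (reducedLapDet src tgt)

/-- `IsWalk l a b`: the list of edges `l` forms a directed walk from `a` to `b`. -/
def IsWalk (src tgt : E → V) : List E → V → V → Prop
  | [], a, b => a = b
  | e :: l, a, b => src e = a ∧ IsWalk src tgt l (tgt e) b

/-- `IsPath l a b`: the list of edges `l` forms a directed path from `a` to `b`:
all visited vertices are distinct (except that the final vertex is allowed to
coincide with the starting vertex). -/
def IsPath (src tgt : E → V) (l : List E) (a b : V) : Prop :=
  IsWalk src tgt l a b ∧ (l.map tgt).Nodup ∧ a ∉ (l.map tgt).dropLast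

/-- `T` is an arborescence rooted at `s`: for every vertex `v` there is a unique
directed path from `s` to `v` using only edges of `T`. -/
def IsArborescence (src tgt : E → V) (s : V) (T : Finset E) : Prop :=
  ∀ v : V, ∃! l : List E, (∀ e ∈ l, e ∈ T) ∧ IsPath src tgt l s v

/-- The edge `e ∉ T` is externally active for the arborescence `T` (w.r.t. the linear
order on `E`): where `P₁`, `P₂` are the two edge-disjoint directed paths in `T ∪ {e}`
sharing their starting vertex and ending at `tgt e`, with `e ∈ P₁`, the smallest edge
on `P₁ ++ P₂` lies on `P₁`. -/
def ExtActive [LinearOrder E] (src tgt : E → V) (T : Finset E) (e : E) : Prop :=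
  e ∉ T ∧ ∃ (u : V) (p₁ p₂ : List E),
    (∀ f ∈ p₁, f ∈ T ∨ f = e) ∧ (∀ f ∈ p₂, f ∈ T ∨ f = e) ∧
    IsPath src tgt p₁ u (tgt e) ∧ IsPath src tgt p₂ u (tgt e) ∧
    e ∈ p₁ ∧ (∀ f ∈ p₁, f ∉ p₂) ∧
    ∃ fmin ∈ p₁, ∀ f ∈ p₁ ++ p₂, fmin ≤ f

/-- The external activity `e(T)` of an arborescence `T`. -/
noncomputable def extActivity [LinearOrder E] (src tgt : E → V) (T : Finset E) : ℕ :=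
  Nat.card {e : E // ExtActive src tgt T e}

/-- The greedoid Tutte polynomial `T(G,s;y) = Σ_{T ∈ A(G,s)} y^{e(T)}`. -/
noncomputable def greedoidTutte [LinearOrder E] (src tgt : E → V) (s : V) : Polynomial ℤ :=
  ∑ᶠ T : {T : Finset E // IsArborescence src tgt s T}, X ^ extActivity src tgt T.1

/-- `f` is a `G^r`-parking function rooted at `s`. -/
def IsParking (src tgt : E → V) (s : V) (f : {v : V // v ≠ s} → ℕ) : Prop :=
  ∀ A : Finset {v : V // v ≠ s}, A.Nonempty →
    ∃ v ∈ A, f v < Nat.card {e : E // (∀ w ∈ A, src e ≠ w.1) ∧ tgt e = v.1}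

/-- The d-level of a `G^r`-parking function: `|E| − |V| + 1 − Σ_{v≠s} f(v)`. -/
noncomputable def parkDlvl (src : E → V) (s : V) (f : {v : V // v ≠ s} → ℕ) : ℕ :=
  ((Fintype.card E : ℤ) - Fintype.card V + 1 - ∑ v : {v : V // v ≠ s}, (f v : ℤ)).toNat

/-- `σ` is an s-decreasing traversal: a sequence in which every vertex and edge of `G`
appears exactly once, satisfying (R1) every vertex other than `s` is immediately
preceded by an edge targeting it, and (R2) every edge is the `<ₑ`-maximum edge not yet
seen whose source has been seen. -/
def IsTraversal [LinearOrder E] (src tgt : E → V) (s : V) (σ : List (V ⊕ E)) : Prop :=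
  σ.Nodup ∧ (∀ x : V ⊕ E, x ∈ σ) ∧
  (∀ (i : ℕ) (hi : i < σ.length) (v : V),
      σ.get ⟨i, hi⟩ = Sum.inl v → v ≠ s →
      0 < i ∧ ∃ e : E, tgt e = v ∧ σ.get ⟨i - 1, by omega⟩ = Sum.inr e) ∧
  (∀ (i : ℕ) (hi : i < σ.length) (e : E),
      σ.get ⟨i, hi⟩ = Sum.inr e →
      Sum.inl (src e) ∈ σ.take i ∧
      ∀ f : E, Sum.inr f ∉ σ.take i → Sum.inl (src f) ∈ σ.take i → f ≤ e)

open scoped Classical in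
/-- `Υ(σ)`: the set of edges immediately preceding a non-sink vertex in `σ`. -/
noncomputable def Upsilon (src tgt : E → V) (s : V) (σ : List (V ⊕ E)) : Finset E :=
  Finset.univ.filter fun e =>
    ∃ (i : ℕ) (hi : i < σ.length) (v : V), v ≠ s ∧ σ.get ⟨i, hi⟩ = Sum.inl v ∧
      0 < i ∧ ∃ hj : i - 1 < σ.length, σ.get ⟨i - 1, hj⟩ = Sum.inr e

/-- The strength of `σ`: the number of strong edges, i.e. edges whose target appears
before them in `σ`. -/
noncomputable def strength (tgt : E → V) (σ : List (V ⊕ E)) : ℕ :=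
  Nat.card {e : E // ∃ (i : ℕ) (hi : i < σ.length),
    σ.get ⟨i, hi⟩ = Sum.inr e ∧ Sum.inl (tgt e) ∈ σ.take i}

/-- `Ψ(σ)(v)`: one less than the number of edges targeting `v` that appear before the
vertex `v` in `σ`. -/
def Psi (tgt : E → V) (s : V) (σ : List (V ⊕ E)) : {v : V // v ≠ s} → ℕ :=
  fun v =>
    (((σ.takeWhile fun x => x ≠ Sum.inl v.1).filterMap Sum.getRight?).filter
      fun e => tgt e = v.1).length - 1

/-!
Modulo the lattice `Δ_s ℤ^{V ∖ s}`, every integer vector is congruent to exactly one recurrent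
configuration: two congruent configurations acquire a common stabilization once enough chips are
added, and a recurrent configuration absorbs arbitrarily large additions from the lattice. The
classes of `~_s` are therefore the elements of `ℤ^{V ∖ s} / (Δ_s ℤ^{V ∖ s} + ℤ β_s)`, a quotient
isomorphic to `ℤ^V / (Δ ℤ^V + ℤ e_s)`.

An integer divides the index of a lattice in `ℤ^V` exactly when it divides the determinant of every
square matrix with columns in the lattice. Since `det Δ = 0`, for `Δ ℤ^V + ℤ e_s` these determinants
are the integral combinations of the entries of column `s` of the adjugate of `Δ`. The columns of
`Δ` sum to zero, so all columns of the adjugate agree, and column `s` coincides with the diagonal,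
whose entries are the `det Δ_v`.
-/

section Determinants

open Matrix

lemma range_mulVecLin_le_sup_span_singleton {m n o R : Type*} [Fintype n] [Fintype o]
    [CommSemiring R] {A : Matrix m n R} {P : Matrix m o R} {b : m → R} :
    LinearMap.range P.mulVecLin ≤ LinearMap.range A.mulVecLin ⊔ Submodule.span R {b} ↔
      ∃ (D : Matrix n o R) (y : o → R), P = A * D + vecMulVec b y := by
  classical
  constructor
  · intro hP
    have hcol (j : o) : ∃ (x : n → R) (a : R), A *ᵥ x + a • b = P.col j := by
      simpa [Submodule.mem_sup, Submodule.mem_span_singleton] using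
        hP ⟨Pi.single j 1, mulVec_single_one P j⟩
    choose x y hxy using hcol
    refine ⟨of fun i j => x j i, y, ?_⟩
    ext i j
    have hij : (A *ᵥ x j) i + y j * b i = P i j := congr_fun (hxy j) i
    rw [← hij, Matrix.add_apply, vecMulVec_apply, mul_comm]
    rfl
  · rintro ⟨D, y, rfl⟩ _ ⟨x, rfl⟩
    refine Submodule.mem_sup.2 ⟨_, ⟨D *ᵥ x, rfl⟩, (y ⬝ᵥ x) • b,
      Submodule.mem_span_singleton.2 ⟨_, rfl⟩, ?_⟩
    simp [vecMulVec_mulVec]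

variable {n R : Type*} [Fintype n] [DecidableEq n] [CommRing R]

lemma det_add_vecMulVec_single (A : Matrix n n R) (i : n) (y : n → R) :
    (A + vecMulVec (Pi.single i 1) y).det = A.det + ∑ j, y j * A.adjugate j i := by
  have hrow : A + vecMulVec (Pi.single i 1) y = A.updateRow i (A i + y) := by
    ext j k
    rcases eq_or_ne j i with rfl | hj <;> simp [vecMulVec_apply, *]
  rw [hrow, det_updateRow_add, updateRow_eq_self, det_eq_sum_mul_adjugate_row (A.updateRow i y) i]
  simp only [adjugate_apply, updateRow_self, updateRow_idem]

lemma adjugate_apply_self (A : Matrix n n R) (i : n) :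
    A.adjugate i i = (A.submatrix (Subtype.val : {j // j ≠ i} → n) Subtype.val).det := by
  have hrow : ∀ j, ¬j ≠ i → ∀ k, k ≠ i → A.updateRow i (Pi.single i 1) j k = 0 := by
    rintro j hj k hk
    obtain rfl := not_ne_iff.1 hj
    simp [hk]
  have hblock : (A.updateRow i (Pi.single i 1)).toSquareBlockProp (· ≠ i) =
      A.submatrix Subtype.val Subtype.val := by
    ext j k
    simp [toSquareBlockProp_def, j.2]
  have : Subsingleton {j // ¬j ≠ i} :=
    ⟨fun j k => Subtype.ext ((not_ne_iff.1 j.2).trans (not_ne_iff.1 k.2).symm)⟩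
  have hcorner : ((A.updateRow i (Pi.single i 1)).toSquareBlockProp (¬· ≠ i)).det = 1 := by
    rw [det_eq_elem_of_subsingleton _ ⟨i, not_ne_iff.2 rfl⟩]
    simp [toSquareBlockProp_def]
  rw [adjugate_apply, twoBlockTriangular_det _ _ hrow, hblock, hcorner, mul_one]

lemma adjugate_apply_eq_of_one_vecMul {A : Matrix n n R} (hA : 1 ᵥ* A = 0) (i j k : n) :
    A.adjugate i j = A.adjugate i k := by
  -- `1 + u 1ᵀ` has determinant one and fixes `A`, so its adjugate fixes `adj A`.
  let u : n → R := Pi.single j 1 - Pi.single k 1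
  have hdet : (1 + vecMulVec u 1).det = 1 := by
    rw [vecMulVec_eq Unit, det_one_add_replicateCol_mul_replicateRow]
    simp [u]
  have hmul : (1 + vecMulVec u 1) * A = A := by
    rw [add_mul, one_mul, vecMulVec_mul, hA, vecMulVec_zero, add_zero]
  have hadj : A.adjugate * (1 + vecMulVec u 1) = A.adjugate := by
    conv_lhs => rw [← hmul, adjugate_mul_distrib, mul_assoc, adjugate_mul, hdet, one_smul, mul_one]
  have hcol : A.adjugate *ᵥ u = 0 := by
    rw [mul_add, mul_one, mul_vecMulVec, add_eq_left] at hadj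
    funext l
    simpa [vecMulVec_apply] using congr_fun₂ hadj l j
  have hi := congr_fun hcol i
  simpa [u, mulVec_sub, sub_eq_zero] using hi

end Determinants

section Index

open Matrix

lemma ker_funLeft_subtypeVal {n R : Type*} [DecidableEq n] [Semiring R] (i : n) :
    LinearMap.ker (LinearMap.funLeft R R (Subtype.val : {j // j ≠ i} → n)) =
      Submodule.span R {Pi.single i 1} := by
  ext x
  rw [LinearMap.mem_ker, Submodule.mem_span_singleton]
  constructor
  · intro hx
    refine ⟨x i, funext fun j => ?_⟩
    rcases eq_or_ne j i with rfl | hj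
    · simp
    · have hxj : x j = 0 := congr_fun hx ⟨j, hj⟩
      simp [hj, hxj]
  · rintro ⟨a, rfl⟩
    funext j
    simp [LinearMap.funLeft_apply, j.2]

lemma natCard_quotient_comap {R M M' : Type*} [Ring R] [AddCommGroup M] [Module R M]
    [AddCommGroup M'] [Module R M'] {f : M →ₗ[R] M'} (hf : Function.Surjective f)
    (N : Submodule R M') : Nat.card (M ⧸ N.comap f) = Nat.card (M' ⧸ N) :=
  AddSubgroup.index_comap_of_surjective N.toAddSubgroup (f := f.toAddMonoidHom) hf

variable {n : Type*} [Fintype n] [DecidableEq n]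

lemma natCard_quotient_range_mulVecLin {A : Matrix n n ℤ} (hA : A.det ≠ 0) :
    Nat.card ((n → ℤ) ⧸ LinearMap.range A.mulVecLin) = A.det.natAbs := by
  have hinj : Function.Injective A.mulVecLin := Matrix.mulVec_injective_of_det_ne_zero hA
  have h := Submodule.natAbs_det_equiv _ (LinearEquiv.ofInjective A.mulVecLin hinj)
  rw [← LinearMap.det_toLin' A]
  exact h.symm

lemma dvd_natCard_quotient_iff {N : Submodule ℤ (n → ℤ)} {g : ℤ} :
    g ∣ Nat.card ((n → ℤ) ⧸ N) ↔
      ∀ P : Matrix n n ℤ, LinearMap.range P.mulVecLin ≤ N → g ∣ P.det := by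
  refine ⟨fun hg P hP => ?_, fun h => ?_⟩
  · rcases eq_or_ne P.det 0 with h0 | h0
    · exact h0 ▸ dvd_zero g
    · refine hg.trans ?_
      rw [← Int.dvd_natAbs, ← natCard_quotient_range_mulVecLin h0, Int.natCast_dvd_natCast]
      exact AddSubgroup.index_dvd_of_le (H := (LinearMap.range P.mulVecLin).toAddSubgroup)
        (K := N.toAddSubgroup) hP
  · rcases eq_or_ne (Nat.card ((n → ℤ) ⧸ N)) 0 with h0 | h0
    · exact h0 ▸ dvd_zero g
    · obtain ⟨φ⟩ := Int.submodule_toAddSubgroup_index_ne_zero_iff.1 h0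
      let f : (n → ℤ) →ₗ[ℤ] n → ℤ := N.subtype ∘ₗ φ.symm.toLinearMap
      have hcard : f.det.natAbs = Nat.card ((n → ℤ) ⧸ N) :=
        Submodule.natAbs_det_equiv N φ.symm
      rw [← hcard, Int.dvd_natAbs, ← LinearMap.det_toMatrix']
      refine h _ ?_
      rw [← toLin'_apply', toLin'_toMatrix']
      exact (LinearMap.range_comp_le_range _ _).trans N.range_subtype.le

lemma natCard_quotient_range_sup_span_single {A : Matrix n n ℤ} (hA : A.det = 0) (i : n) :
    (Nat.card ((n → ℤ) ⧸ LinearMap.range A.mulVecLin ⊔ Submodule.span ℤ {Pi.single i 1}) : ℤ) =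
      univ.gcd fun j => A.adjugate j i := by
  refine Int.dvd_antisymm (by positivity) (Int.nonneg_of_normalize_eq_self normalize_gcd)
    (Finset.dvd_gcd fun j _ => ?_) (dvd_natCard_quotient_iff.2 fun P hP => ?_)
  · have hP : (A + vecMulVec (Pi.single i 1) (Pi.single j 1)).det = A.adjugate j i := by
      simp [det_add_vecMulVec_single, hA, Pi.single_apply]
    rw [← hP]
    exact dvd_natCard_quotient_iff.1 dvd_rfl _
      (range_mulVecLin_le_sup_span_singleton.2 ⟨1, _, by rw [mul_one]⟩)
  · obtain ⟨D, y, rfl⟩ := range_mulVecLin_le_sup_span_singleton.1 hP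
    rw [det_add_vecMulVec_single, det_mul, hA, zero_mul, zero_add, adjugate_mul_distrib]
    refine Finset.dvd_sum fun j _ => Dvd.dvd.mul_left ?_ _
    rw [mul_apply]
    exact Finset.dvd_sum fun k _ => (gcd_dvd (mem_univ k)).mul_left _

lemma natCard_quotient_range_sup_span_single_of_one_vecMul {A : Matrix n n ℤ} (hA : 1 ᵥ* A = 0)
    (i : n) :
    (Nat.card ((n → ℤ) ⧸ LinearMap.range A.mulVecLin ⊔ Submodule.span ℤ {Pi.single i 1}) : ℤ) =
      univ.gcd fun j => (A.submatrix (Subtype.val : {k // k ≠ j} → n) Subtype.val).det := by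
  have : Nonempty n := ⟨i⟩
  have hdet : A.det = 0 := exists_vecMul_eq_zero_iff.1 ⟨1, one_ne_zero, hA⟩
  rw [natCard_quotient_range_sup_span_single hdet i]
  refine gcd_congr rfl fun j _ => ?_
  rw [adjugate_apply_eq_of_one_vecMul hA j i j, adjugate_apply_self]

end Index

section Configurations

variable {ι : Type*}

/-- The inclusion of the monoid of configurations into the group of integer vectors. -/
def toInt : (ι → ℕ) →+ ι → ℤ :=
  (Nat.castAddMonoidHom ℤ).compLeft ι

lemma toInt_apply (c : ι → ℕ) (i : ι) : toInt c i = c i :=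
  rfl

lemma toInt_injective : Function.Injective (toInt (ι := ι)) :=
  (Nat.cast_injective (R := ℤ)).comp_left (α := ι)

end Configurations

section Laplacian

open Matrix

omit [DecidableEq E]

variable {src tgt : E → V} {s : V}

omit [Fintype V] in
lemma outdeg_le_card (src : E → V) (v : V) : outdeg src v ≤ Fintype.card E :=
  card_filter_le _ _

omit [Fintype V] in
lemma numEdges_pos (src tgt : E → V) (e : E) : 0 < numEdges src tgt (src e) (tgt e) :=
  card_pos.2 ⟨e, by simp⟩

lemma sum_numEdges (src tgt : E → V) (v : V) : ∑ w, numEdges src tgt v w = outdeg src v := by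
  rw [outdeg, card_eq_sum_card_fiberwise fun e _ => mem_univ (tgt e)]
  simp only [numEdges, filter_filter]

omit [Fintype V] in
lemma lapMatrix_apply (src tgt : E → V) (v w : V) :
    lapMatrix src tgt v w = (if v = w then (outdeg src w : ℤ) else 0) - numEdges src tgt w v := by
  rcases eq_or_ne v w with rfl | h <;> simp [lapMatrix, *]

lemma one_vecMul_lapMatrix (src tgt : E → V) : 1 ᵥ* lapMatrix src tgt = 0 := by
  funext v
  simp [vecMul, dotProduct, lapMatrix_apply, ← sum_numEdges src tgt v]

lemma natCard_quotient_range_lapMatrix_sup_span_single (src tgt : E → V) (s : V) :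
    (Nat.card ((V → ℤ) ⧸ LinearMap.range (lapMatrix src tgt).mulVecLin ⊔
      Submodule.span ℤ {Pi.single s 1}) : ℤ) = periodConstant src tgt :=
  natCard_quotient_range_sup_span_single_of_one_vecMul (one_vecMul_lapMatrix src tgt) s

/-- The reduced Laplacian `Δ_s`: the Laplacian without the row and the column of the sink `s`. -/
def reducedLapMatrix (src tgt : E → V) (s : V) : Matrix {v : V // v ≠ s} {v : V // v ≠ s} ℤ :=
  (lapMatrix src tgt).submatrix Subtype.val Subtype.val

lemma vecMul_reducedLapMatrix (h : V → ℤ) (v : {v : V // v ≠ s}) :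
    ((h ∘ Subtype.val) ᵥ* reducedLapMatrix src tgt s) v =
      (h ᵥ* lapMatrix src tgt) v + h s * numEdges src tgt v s := by
  have hsplit := Fintype.sum_eq_add_sum_subtype_ne (fun w => h w * lapMatrix src tgt w v) s
  have hsv : lapMatrix src tgt s v = -numEdges src tgt v s := by
    rw [lapMatrix_apply, if_neg v.2.symm, zero_sub]
  simp only [vecMul, dotProduct, hsplit, hsv, reducedLapMatrix, submatrix_apply, Function.comp]
  ring

lemma mulVec_reducedLapMatrix (q : V → ℤ) (v : {v : V // v ≠ s}) :
    (reducedLapMatrix src tgt s *ᵥ (q ∘ Subtype.val)) v =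
      (lapMatrix src tgt *ᵥ q) v + q s * numEdges src tgt s v := by
  have hsplit := Fintype.sum_eq_add_sum_subtype_ne (fun w => lapMatrix src tgt v w * q w) s
  have hvs : lapMatrix src tgt v s = -numEdges src tgt s v := by
    rw [lapMatrix_apply, if_neg v.2, zero_sub]
  simp only [mulVec, dotProduct, hsplit, hvs, reducedLapMatrix, submatrix_apply, Function.comp]
  ring

end Laplacian

section Termination

open Matrix

omit [DecidableEq E]

variable {src tgt : E → V} {s : V}

/-- Every vertex has a directed path to `s`. This is what allows `s` to act as a sink. -/
def GloballyReachable (src tgt : E → V) (s : V) : Prop :=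
  ∀ v, Relation.ReflTransGen (fun a b => ∃ e : E, src e = a ∧ tgt e = b) v s

omit [Fintype V] [DecidableEq V] [Fintype E] in
lemma GloballyReachable.exists_dist (hs : GloballyReachable src tgt s) :
    ∃ d : V → ℕ, ∀ v ≠ s, ∃ e, src e = v ∧ d (tgt e) < d v := by
  classical
  have hwalk : ∀ v, ∃ k l, l.length = k ∧ IsWalk src tgt l v s := by
    intro v
    induction hs v using Relation.ReflTransGen.head_induction_on with
    | refl => exact ⟨0, [], rfl, rfl⟩
    | head hab _ ih =>
      obtain ⟨e, he, rfl⟩ := hab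
      obtain ⟨_, l, -, hl⟩ := ih
      exact ⟨_, e :: l, rfl, he, hl⟩
  refine ⟨fun v => Nat.find (hwalk v), fun v hv => ?_⟩
  obtain ⟨l, hlen, hl⟩ := Nat.find_spec (hwalk v)
  cases l with
  | nil => exact absurd hl hv
  | cons e l =>
    have hle : Nat.find (hwalk (tgt e)) ≤ l.length := Nat.find_min' _ ⟨l, rfl, hl.2⟩
    exact ⟨e, hl.1, hle.trans_lt (l.length.lt_succ_self.trans_eq hlen)⟩

lemma vecMul_lapMatrix_neg {g : V → ℤ} (hg : 0 ≤ g) {e : E}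
    (he : outdeg src (src e) * g (src e) < g (tgt e)) :
    (g ᵥ* lapMatrix src tgt) (src e) < 0 := by
  have hexpand : (g ᵥ* lapMatrix src tgt) (src e) =
      outdeg src (src e) * g (src e) - ∑ w, numEdges src tgt (src e) w * g w := by
    simp [vecMul, dotProduct, lapMatrix_apply, mul_sub, mul_comm]
  have hpos : (1 : ℤ) ≤ numEdges src tgt (src e) (tgt e) := by
    exact_mod_cast numEdges_pos src tgt e
  have hsum : g (tgt e) ≤ ∑ w, numEdges src tgt (src e) w * g w :=
    (le_mul_of_one_le_left (hg _) hpos).trans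
      (single_le_sum (f := fun w => (numEdges src tgt (src e) w * g w : ℤ))
        (fun w _ => mul_nonneg (by positivity) (hg w)) (mem_univ _))
  linarith

lemma GloballyReachable.exists_vecMul_lapMatrix_neg (hs : GloballyReachable src tgt s) :
    ∃ g : V → ℕ, ∀ v ≠ s, (toInt g ᵥ* lapMatrix src tgt) v < 0 := by
  obtain ⟨d, hd⟩ := hs.exists_dist
  -- This `g` grows towards the sink by a factor exceeding every out-degree.
  let g (v : V) := (Fintype.card E + 1) ^ (univ.sup d - d v)
  refine ⟨g, fun v hv => ?_⟩
  obtain ⟨e, rfl, hlt⟩ := hd v hv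
  have hle : d (src e) ≤ univ.sup d := le_sup (mem_univ _)
  have hgrowth : outdeg src (src e) * g (src e) < g (tgt e) :=
    calc outdeg src (src e) * g (src e)
      _ < (Fintype.card E + 1) * g (src e) :=
        Nat.mul_lt_mul_of_pos_right (Nat.lt_succ_of_le (outdeg_le_card src _)) (by positivity)
      _ = (Fintype.card E + 1) ^ (univ.sup d - d (src e) + 1) := (pow_succ' _ _).symm
      _ ≤ g (tgt e) := Nat.pow_le_pow_right (Nat.succ_pos _) (by lia)
  exact vecMul_lapMatrix_neg (fun w => Int.natCast_nonneg _) (by exact_mod_cast hgrowth)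

lemma GloballyReachable.exists_vecMul_reducedLapMatrix_pos (hs : GloballyReachable src tgt s) :
    ∃ h : {v : V // v ≠ s} → ℕ,
      ∀ v, 0 < (toInt h ᵥ* reducedLapMatrix src tgt s) v := by
  obtain ⟨g, hg⟩ := hs.exists_vecMul_lapMatrix_neg
  refine ⟨fun w => univ.sup g - g w, fun v => ?_⟩
  let h (w : V) : ℤ := (univ.sup g - g w : ℕ)
  have hcompl : h = ((univ.sup g : ℕ) : ℤ) • 1 - toInt g := by
    funext w
    have hw : g w ≤ univ.sup g := le_sup (mem_univ w)
    simp [h, toInt_apply, Nat.cast_sub hw]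
  have hpos : 0 < (h ᵥ* lapMatrix src tgt) v := by
    rw [hcompl, sub_vecMul, smul_vecMul, one_vecMul_lapMatrix, smul_zero, zero_sub]
    exact neg_pos.2 (hg v v.2)
  calc 0 < (h ᵥ* lapMatrix src tgt) v + h s * numEdges src tgt v s :=
        add_pos_of_pos_of_nonneg hpos (by positivity)
    _ = _ := (vecMul_reducedLapMatrix h v).symm

end Termination

section Stabilization

open Matrix

omit [Fintype V] [DecidableEq E]

variable {src tgt : E → V} {s : V} {c d : {v : V // v ≠ s} → ℕ}

lemma toInt_sfire {v : {v : V // v ≠ s}} (hv : outdeg src v.1 ≤ c v) :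
    toInt (sfire src tgt s c v) = toInt c - (reducedLapMatrix src tgt s).col v := by
  funext w
  rcases eq_or_ne w v with rfl | hw
  · simp only [sfire, toInt_apply, reducedLapMatrix, lapMatrix_apply, Pi.sub_apply, col_apply,
      submatrix_apply, if_true]
    lia
  · simp [sfire, toInt_apply, reducedLapMatrix, lapMatrix_apply, hw, Subtype.val_inj]

lemma SFireStep.add (h : SFireStep src tgt s c d) (e : {v : V // v ≠ s} → ℕ) :
    SFireStep src tgt s (c + e) (d + e) := by
  obtain ⟨v, hv, rfl⟩ := h
  have hv' : outdeg src v.1 ≤ (c + e) v := hv.trans (Nat.le_add_right _ _)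
  refine ⟨v, hv', toInt_injective ?_⟩
  rw [toInt_sfire hv', map_add, map_add, toInt_sfire hv]
  abel

lemma SReach.add (h : SReach src tgt s c d) (e : {v : V // v ≠ s} → ℕ) :
    SReach src tgt s (c + e) (d + e) :=
  h.lift (· + e) fun _ _ hstep => hstep.add e

lemma sFireStep_diamond {a b c : {v : V // v ≠ s} → ℕ} (hab : SFireStep src tgt s a b)
    (hac : SFireStep src tgt s a c) :
    ∃ d, Relation.ReflGen (SFireStep src tgt s) b d ∧ SReach src tgt s c d := by
  obtain ⟨v, hv, rfl⟩ := hab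
  obtain ⟨w, hw, rfl⟩ := hac
  rcases eq_or_ne v w with rfl | hvw
  · exact ⟨_, .refl, .refl⟩
  have hw' : outdeg src w.1 ≤ sfire src tgt s a v w := by
    simp only [sfire, if_neg hvw.symm]
    lia
  have hv' : outdeg src v.1 ≤ sfire src tgt s a w v := by
    simp only [sfire, if_neg hvw]
    lia
  refine ⟨_, .single ⟨w, hw', rfl⟩, .single ⟨v, hv', toInt_injective ?_⟩⟩
  rw [toInt_sfire hw', toInt_sfire hv, toInt_sfire hv', toInt_sfire hw, sub_right_comm]

lemma SStable.eq_of_sReach (hc : SStable src s c) (h : SReach src tgt s c d) : d = c := by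
  rcases h.cases_head with rfl | ⟨_, ⟨v, hv, -⟩, -⟩
  · rfl
  · exact absurd hv (hc v).not_ge

lemma SReach.unique {a : {v : V // v ≠ s} → ℕ} (hac : SReach src tgt s a c)
    (had : SReach src tgt s a d) (hc : SStable src s c) (hd : SStable src s d) : c = d := by
  obtain ⟨x, hcx, hdx⟩ := Relation.church_rosser (fun _ _ _ => sFireStep_diamond) hac had
  rw [← hc.eq_of_sReach hcx, hd.eq_of_sReach hdx]

variable [Finite V]

lemma GloballyReachable.wellFounded_flip_sFireStep (hs : GloballyReachable src tgt s) :
    WellFounded (flip (SFireStep src tgt s)) := by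
  have := Fintype.ofFinite V
  obtain ⟨h, hpos⟩ := hs.exists_vecMul_reducedLapMatrix_pos
  refine Subrelation.wf ?_ (measure fun c => h ⬝ᵥ c).wf
  rintro _ c ⟨v, hv, rfl⟩
  have hcast (c : {v : V // v ≠ s} → ℕ) : ((h ⬝ᵥ c : ℕ) : ℤ) = toInt h ⬝ᵥ toInt c := by
    simp [dotProduct, toInt_apply]
  have hcol : toInt h ⬝ᵥ (reducedLapMatrix src tgt s).col v =
      (toInt h ᵥ* reducedLapMatrix src tgt s) v := rfl
  change h ⬝ᵥ sfire src tgt s c v < h ⬝ᵥ c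
  zify
  rw [hcast, hcast, toInt_sfire hv, dotProduct_sub, hcol]
  exact sub_lt_self _ (hpos v)

lemma GloballyReachable.exists_sReach_sStable (hs : GloballyReachable src tgt s)
    (c : {v : V // v ≠ s} → ℕ) : ∃ d, SReach src tgt s c d ∧ SStable src s d := by
  induction c using hs.wellFounded_flip_sFireStep.induction with
  | _ c ih =>
    by_cases hc : SStable src s c
    · exact ⟨c, .refl, hc⟩
    · obtain ⟨v, hv⟩ := not_forall.1 hc
      have hstep : SFireStep src tgt s c (sfire src tgt s c v) := ⟨v, not_lt.1 hv, rfl⟩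
      obtain ⟨d, hd, hstable⟩ := ih _ hstep
      exact ⟨d, .head hstep hd, hstable⟩

lemma GloballyReachable.sReach_stab (hs : GloballyReachable src tgt s)
    (c : {v : V // v ≠ s} → ℕ) : SReach src tgt s c (stab src tgt s c) :=
  (Classical.epsilon_spec (hs.exists_sReach_sStable c)).1

lemma GloballyReachable.sStable_stab (hs : GloballyReachable src tgt s)
    (c : {v : V // v ≠ s} → ℕ) : SStable src s (stab src tgt s c) :=
  (Classical.epsilon_spec (hs.exists_sReach_sStable c)).2

lemma GloballyReachable.stab_eq_of_sReach (hs : GloballyReachable src tgt s)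
    (h : SReach src tgt s c d) : stab src tgt s c = stab src tgt s d :=
  (hs.sReach_stab c).unique (h.trans (hs.sReach_stab d)) (hs.sStable_stab c) (hs.sStable_stab d)

lemma GloballyReachable.stab_stab_add (hs : GloballyReachable src tgt s)
    (c e : {v : V // v ≠ s} → ℕ) :
    stab src tgt s (stab src tgt s c + e) = stab src tgt s (c + e) :=
  (hs.stab_eq_of_sReach ((hs.sReach_stab c).add e)).symm

end Stabilization

section FiringLattice

open Matrix

omit [DecidableEq E]

variable {src tgt : E → V} {s : V} {c d : {v : V // v ≠ s} → ℕ}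

/-- The lattice of all changes of an `s`-configuration caused by integral combinations of firings,
that is the image of the reduced Laplacian. -/
def firingLattice (src tgt : E → V) (s : V) : Submodule ℤ ({v : V // v ≠ s} → ℤ) :=
  LinearMap.range (reducedLapMatrix src tgt s).mulVecLin

lemma SReach.toInt_smodEq (h : SReach src tgt s c d) :
    toInt c ≡ toInt d [SMOD firingLattice src tgt s] := by
  induction h with
  | refl => rfl
  | tail _ hstep ih =>
    obtain ⟨v, hv, rfl⟩ := hstep
    refine ih.trans (SModEq.sub_mem.2 ⟨Pi.single v 1, ?_⟩)
    rw [toInt_sfire hv, sub_sub_cancel]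
    exact mulVec_single_one _ v

lemma GloballyReachable.toInt_stab_smodEq (hs : GloballyReachable src tgt s)
    (c : {v : V // v ≠ s} → ℕ) :
    toInt (stab src tgt s c) ≡ toInt c [SMOD firingLattice src tgt s] :=
  (hs.sReach_stab c).toInt_smodEq.symm

lemma exists_sReach_sub_mulVec (p : {v : V // v ≠ s} → ℕ) (hp : ∀ v, p v * outdeg src v.1 ≤ c v) :
    ∃ d, SReach src tgt s c d ∧
      toInt d = toInt c - reducedLapMatrix src tgt s *ᵥ toInt p := by
  induction p using WellFoundedLT.induction generalizing c with
  | _ p ih =>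
    rcases eq_or_ne p 0 with rfl | hp0
    · exact ⟨c, .refl, by simp⟩
    obtain ⟨v, hpv⟩ := Function.ne_iff.1 hp0
    have hle : Pi.single v 1 ≤ p :=
      update_le_iff.2 ⟨Nat.one_le_iff_ne_zero.2 hpv, fun _ _ => Nat.zero_le _⟩
    obtain ⟨p, rfl⟩ := exists_add_of_le hle
    have hv : outdeg src v.1 ≤ c v := by
      refine le_trans ?_ (hp v)
      simp [add_mul]
    have hp' : ∀ w, p w * outdeg src w.1 ≤ sfire src tgt s c v w := by
      intro w
      have hw := hp w
      rcases eq_or_ne w v with rfl | hwv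
      · simp only [Pi.add_apply, Pi.single_eq_same, add_mul, one_mul] at hw
        simp only [sfire, if_true]
        lia
      · simp only [Pi.add_apply, Pi.single_eq_of_ne hwv, zero_add] at hw
        simp only [sfire, if_neg hwv]
        lia
    have hlt : p < Pi.single v 1 + p := lt_add_of_pos_left _ (by simp)
    obtain ⟨d, hd, hd_eq⟩ := ih p hlt hp'
    have hsingle : toInt (Pi.single v 1) = Pi.single v (1 : ℤ) := by
      funext w
      simp [toInt_apply, Pi.single_apply]
    refine ⟨d, .head ⟨v, hv, rfl⟩ hd, ?_⟩
    rw [hd_eq, toInt_sfire hv, map_add, mulVec_add, hsingle, mulVec_single_one]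
    abel

lemma GloballyReachable.exists_stab_add_eq (hs : GloballyReachable src tgt s)
    (h : toInt c ≡ toInt d [SMOD firingLattice src tgt s]) :
    ∃ b, ∀ e ≥ b, stab src tgt s (c + e) = stab src tgt s (d + e) := by
  obtain ⟨q, hq⟩ := SModEq.sub_mem.1 h
  let p : {v : V // v ≠ s} → ℕ := fun v => (q v).toNat
  let p' : {v : V // v ≠ s} → ℕ := fun v => (-q v).toNat
  have hpq : q = toInt p - toInt p' := by
    funext v
    exact (Int.toNat_sub_toNat_neg (q v)).symm
  refine ⟨fun v => p v * outdeg src v.1 + p' v * outdeg src v.1, fun e he => ?_⟩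
  obtain ⟨x, hcx, hx⟩ := exists_sReach_sub_mulVec (tgt := tgt) (c := c + e) p fun v =>
    (Nat.le_add_right _ _).trans ((he v).trans (Nat.le_add_left _ _))
  obtain ⟨y, hdy, hy⟩ := exists_sReach_sub_mulVec (tgt := tgt) (c := d + e) p' fun v =>
    (Nat.le_add_left _ _).trans ((he v).trans (Nat.le_add_left _ _))
  have hxy : x = y := by
    refine toInt_injective (sub_eq_zero.1 ?_)
    have hq' : reducedLapMatrix src tgt s *ᵥ q = toInt c - toInt d := hq
    rw [hpq, mulVec_sub] at hq'
    rw [hx, hy, map_add, map_add]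
    linear_combination -hq'
  rw [hs.stab_eq_of_sReach hcx, hs.stab_eq_of_sReach hdy, hxy]

end FiringLattice

section Recurrent

omit [Fintype V] [DecidableEq E]

variable {src tgt : E → V} {s : V} {c d e : {v : V // v ≠ s} → ℕ}

/-- A strictly positive configuration that can be added to a recurrent configuration without
changing its stabilization. The truncated subtraction is exact, since the subtracted configuration
is stable. -/
noncomputable def neutralConfig (src tgt : E → V) (s : V) : {v : V // v ≠ s} → ℕ :=
  fun v => 2 * outdeg src v.1 - stab src tgt s (fun w => 2 * outdeg src w.1) v

variable [Finite V]

lemma GloballyReachable.neutralConfig_add_stab (hs : GloballyReachable src tgt s) :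
    (neutralConfig src tgt s + stab src tgt s fun w => 2 * outdeg src w.1) =
      fun w => 2 * outdeg src w.1 := by
  funext v
  have := hs.sStable_stab (fun w => 2 * outdeg src w.1) v
  simp only [neutralConfig, Pi.add_apply]
  lia

lemma GloballyReachable.neutralConfig_pos (hs : GloballyReachable src tgt s)
    (v : {v : V // v ≠ s}) : 0 < neutralConfig src tgt s v := by
  have := hs.sStable_stab (fun w => 2 * outdeg src w.1) v
  simp only [neutralConfig]
  lia

lemma GloballyReachable.exists_le_nsmul_neutralConfig (hs : GloballyReachable src tgt s)
    (b : {v : V // v ≠ s} → ℕ) :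
    ∃ m : ℕ, b ≤ m • neutralConfig src tgt s := by
  have := Fintype.ofFinite V
  refine ⟨univ.sup b, fun v => ?_⟩
  exact (le_sup (mem_univ v)).trans (Nat.le_mul_of_pos_right _ (hs.neutralConfig_pos v))

lemma SRecurrent.stab_add (hs : GloballyReachable src tgt s)
    (hc : SRecurrent src tgt s c) (e : {v : V // v ≠ s} → ℕ) :
    SRecurrent src tgt s (stab src tgt s (c + e)) := by
  intro c₁
  obtain ⟨c₂, rfl⟩ := hc c₁
  exact ⟨c₂ + e, by rw [hs.stab_stab_add, add_assoc]⟩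

lemma GloballyReachable.sRecurrent_stab (hs : GloballyReachable src tgt s)
    (hc : ∀ v, outdeg src v.1 ≤ c v) : SRecurrent src tgt s (stab src tgt s c) := by
  intro c₁
  have hle : stab src tgt s c₁ ≤ c := fun v => (hs.sStable_stab c₁ v).le.trans (hc v)
  exact ⟨c - stab src tgt s c₁, by rw [← hs.stab_stab_add, add_tsub_cancel_of_le hle]⟩

lemma SRecurrent.stab_add_eq_self (hs : GloballyReachable src tgt s)
    (hc : SRecurrent src tgt s c) (h : d + stab src tgt s e = e) :
    stab src tgt s (c + d) = c := by
  obtain ⟨x, rfl⟩ := hc e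
  calc stab src tgt s (stab src tgt s (e + x) + d)
      = stab src tgt s (e + (x + d)) := by rw [hs.stab_stab_add, add_assoc]
    _ = stab src tgt s (stab src tgt s e + (x + d)) := (hs.stab_stab_add _ _).symm
    _ = stab src tgt s (d + stab src tgt s e + x) := by congr 1; abel
    _ = stab src tgt s (e + x) := by rw [h]

lemma SRecurrent.stab_add_nsmul_neutralConfig (hs : GloballyReachable src tgt s)
    (hc : SRecurrent src tgt s c) (m : ℕ) :
    stab src tgt s (c + m • neutralConfig src tgt s) = c := by
  induction m with
  | zero =>
    obtain ⟨x, rfl⟩ := hc 0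
    rw [zero_smul, hs.stab_stab_add, add_zero]
  | succ m ih =>
    rw [succ_nsmul, ← add_assoc, ← hs.stab_stab_add, ih,
      hc.stab_add_eq_self hs hs.neutralConfig_add_stab]

end Recurrent

section Representatives

open Matrix

omit [DecidableEq E]

variable {src tgt : E → V} {s : V} {c d : {v : V // v ≠ s} → ℕ}

lemma GloballyReachable.toInt_neutralConfig_mem (hs : GloballyReachable src tgt s) :
    toInt (neutralConfig src tgt s) ∈ firingLattice src tgt s := by
  have hmod := (hs.toInt_stab_smodEq fun w => 2 * outdeg src w.1).symm
  rw [SModEq.sub_mem] at hmod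
  nth_rw 1 [← hs.neutralConfig_add_stab] at hmod
  rwa [map_add, add_sub_cancel_right] at hmod

lemma SRecurrent.eq_of_smodEq (hs : GloballyReachable src tgt s) (hc : SRecurrent src tgt s c)
    (hd : SRecurrent src tgt s d) (h : toInt c ≡ toInt d [SMOD firingLattice src tgt s]) :
    c = d := by
  obtain ⟨b, hb⟩ := hs.exists_stab_add_eq h
  obtain ⟨m, hm⟩ := hs.exists_le_nsmul_neutralConfig b
  rw [← hc.stab_add_nsmul_neutralConfig hs m, hb _ hm, hd.stab_add_nsmul_neutralConfig hs m]

lemma GloballyReachable.exists_sRecurrent_smodEq (hs : GloballyReachable src tgt s)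
    (z : {v : V // v ≠ s} → ℤ) :
    ∃ c, SRecurrent src tgt s c ∧ toInt c ≡ z [SMOD firingLattice src tgt s] := by
  obtain ⟨m, hm⟩ := hs.exists_le_nsmul_neutralConfig fun v => outdeg src v.1 + (-z v).toNat
  let b : {v : V // v ≠ s} → ℕ := fun v => (z v + m * neutralConfig src tgt s v).toNat
  have hm' (v) : outdeg src v.1 ≤ z v + m * neutralConfig src tgt s v := by
    have hv := hm v
    simp only [Pi.smul_apply, smul_eq_mul] at hv
    lia
  have hb_apply (v) : (b v : ℤ) = z v + m * neutralConfig src tgt s v :=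
    Int.toNat_of_nonneg ((Int.natCast_nonneg _).trans (hm' v))
  have hb : toInt b = z + m • toInt (neutralConfig src tgt s) := by
    funext v
    simpa [toInt_apply] using hb_apply v
  have hbz : toInt b ≡ z [SMOD firingLattice src tgt s] := by
    rw [SModEq.sub_mem, hb, add_sub_cancel_left]
    exact nsmul_mem hs.toInt_neutralConfig_mem m
  exact ⟨stab src tgt s b, hs.sRecurrent_stab fun v => by
      exact_mod_cast (hm' v).trans_eq (hb_apply v).symm,
    (hs.toInt_stab_smodEq b).trans hbz⟩

end Representatives

section Classes

open Matrix

omit [DecidableEq E]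

variable {src tgt : E → V} {s : V}

/-- The lattice modulo which two recurrent configurations are compared by `~_s`: firings of the
vertices other than `s`, together with the effect `β_s` of firing the sink itself. -/
def classLattice (src tgt : E → V) (s : V) : Submodule ℤ ({v : V // v ≠ s} → ℤ) :=
  firingLattice src tgt s ⊔ Submodule.span ℤ {toInt (betaS src tgt s)}

lemma GloballyReachable.smodEq_of_sEquiv (hs : GloballyReachable src tgt s)
    {c d : {v : V // v ≠ s} → ℕ} (h : SEquiv src tgt s c d) :
    toInt c ≡ toInt d [SMOD classLattice src tgt s] := by
  obtain ⟨k, rfl⟩ := h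
  have hstab := (hs.toInt_stab_smodEq (c + k • betaS src tgt s)).mono
    (le_sup_left : _ ≤ classLattice src tgt s)
  have hbeta : toInt (betaS src tgt s) ∈ classLattice src tgt s :=
    Submodule.mem_sup_right (Submodule.mem_span_singleton_self _)
  refine SModEq.trans ?_ hstab.symm
  rw [SModEq.comm, SModEq.sub_mem, map_add, map_nsmul, add_sub_cancel_left]
  exact nsmul_mem hbeta k

lemma GloballyReachable.sEquiv_of_smodEq (hs : GloballyReachable src tgt s) (a b : RecS src tgt s)
    {k : ℕ} (h : toInt a.1 + k • toInt (betaS src tgt s) ≡ toInt b.1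
      [SMOD firingLattice src tgt s]) : SEquiv src tgt s a.1 b.1 := by
  refine ⟨k, (a.2.stab_add hs _).eq_of_smodEq hs b.2 ((hs.toInt_stab_smodEq _).trans ?_)⟩
  rwa [map_add, map_nsmul]

/-- The class in `ℤ^{V ∖ s}` modulo `classLattice` of a recurrent configuration. -/
def latticeClass (src tgt : E → V) (s : V) (a : RecS src tgt s) :
    ({v : V // v ≠ s} → ℤ) ⧸ classLattice src tgt s :=
  Submodule.Quotient.mk (toInt a.1)

lemma GloballyReachable.recSSetoid_eq_ker (hs : GloballyReachable src tgt s) :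
    recSSetoid src tgt s = Setoid.ker (latticeClass src tgt s) := by
  refine le_antisymm (Setoid.eqvGen_le fun a b h => hs.smodEq_of_sEquiv h) fun a b h => ?_
  have hmem : toInt b.1 - toInt a.1 ∈ classLattice src tgt s := SModEq.sub_mem.1 (SModEq.symm h)
  obtain ⟨x, hx, _, hk, hxy⟩ := Submodule.mem_sup.1 hmem
  obtain ⟨k, rfl⟩ := Submodule.mem_span_singleton.1 hk
  obtain ⟨k, rfl | rfl⟩ := k.eq_nat_or_neg
  · refine .rel _ _ (hs.sEquiv_of_smodEq a b (k := k) (SModEq.comm.1 (SModEq.sub_mem.2 ?_)))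
    convert hx using 1
    linear_combination -hxy
  · refine .symm _ _ (.rel _ _ (hs.sEquiv_of_smodEq b a (k := k) (SModEq.sub_mem.2 ?_)))
    convert hx using 1
    linear_combination -hxy

lemma GloballyReachable.latticeClass_surjective (hs : GloballyReachable src tgt s) :
    Function.Surjective (latticeClass src tgt s) := by
  intro y
  obtain ⟨z, rfl⟩ := Submodule.Quotient.mk_surjective _ y
  obtain ⟨c, hc, hcz⟩ := hs.exists_sRecurrent_smodEq z
  exact ⟨⟨c, hc⟩, hcz.mono le_sup_left⟩

lemma GloballyReachable.natCard_recSQuot (hs : GloballyReachable src tgt s) :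
    Nat.card (RecSQuot src tgt s) =
      Nat.card (({v : V // v ≠ s} → ℤ) ⧸ classLattice src tgt s) := by
  rw [RecSQuot, hs.recSSetoid_eq_ker]
  exact Nat.card_congr (Setoid.quotientKerEquivOfSurjective _ hs.latticeClass_surjective)

lemma funLeft_mulVec_lapMatrix (q : V → ℤ) :
    LinearMap.funLeft ℤ ℤ Subtype.val (lapMatrix src tgt *ᵥ q) =
      reducedLapMatrix src tgt s *ᵥ (q ∘ Subtype.val) + -q s • toInt (betaS src tgt s) := by
  funext v
  rw [Pi.add_apply, mulVec_reducedLapMatrix]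
  simp [LinearMap.funLeft_apply, toInt_apply, betaS]

lemma map_funLeft_range_lapMatrix (src tgt : E → V) (s : V) :
    (LinearMap.range (lapMatrix src tgt).mulVecLin).map (LinearMap.funLeft ℤ ℤ Subtype.val) =
      classLattice src tgt s := by
  refine le_antisymm ?_ fun z hz => ?_
  · rintro _ ⟨_, ⟨q, rfl⟩, rfl⟩
    rw [mulVecLin_apply, funLeft_mulVec_lapMatrix]
    exact Submodule.add_mem_sup ⟨_, rfl⟩
      (Submodule.smul_mem _ _ (Submodule.mem_span_singleton_self _))
  · obtain ⟨_, ⟨x, rfl⟩, _, hy, rfl⟩ := Submodule.mem_sup.1 hz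
    obtain ⟨k, rfl⟩ := Submodule.mem_span_singleton.1 hy
    let q : V → ℤ := fun v => if h : v = s then -k else x ⟨v, h⟩
    have hqs : q s = -k := dif_pos rfl
    have hqx : q ∘ Subtype.val = x := funext fun v => dif_neg v.2
    refine ⟨_, ⟨q, rfl⟩, ?_⟩
    rw [mulVecLin_apply, funLeft_mulVec_lapMatrix, hqx, hqs, neg_neg, mulVecLin_apply]

theorem card_recSQuot_eq_periodConstant_general (src tgt : E → V) (s : V)
    (hs : GloballyReachable src tgt s) :
    (Nat.card (RecSQuot src tgt s) : ℤ) = periodConstant src tgt := by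
  have hf := LinearMap.funLeft_surjective_of_injective ℤ ℤ _
    (Subtype.val_injective (p := (· ≠ s)))
  rw [hs.natCard_recSQuot, ← natCard_quotient_comap hf, ← map_funLeft_range_lapMatrix,
    Submodule.comap_map_eq, ker_funLeft_subtypeVal,
    natCard_quotient_range_lapMatrix_sup_span_single]

end Classes

/-- The number of `~_s`-classes of s-recurrent configurations equals
the period constant `α = gcd_{v∈V} det Δ_v`; in particular it does not depend on `s`. -/
theorem card_recSQuot_eq_periodConstant [Nonempty V] (src tgt : E → V)
    (hG : StronglyConnected src tgt) (s : V) :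
    (Nat.card (RecSQuot src tgt s) : ℤ) = periodConstant src tgt := by
  exact card_recSQuot_eq_periodConstant_general src tgt s fun v => hG v s

end SandpileBM
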